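/- Let σ > 0 and let B, ξ be real numbers. Then ∫_0^∞ ln[ (1 + ((e^B − 1)/2)·erfc((η + ξ)/σ)) · (1 + ((e^{−B} − 1)/2)·erfc((η − ξ)/σ)) ] dη = −B·ξ + σ·∫_0^∞ ln(1 + sinh²(B/2)·erfc(η)·erfc(−η)) dη. -/

import Mathlib

open MeasureTheory Real

/-- The complementary error function `erfc(x) = (2/√π) ∫_x^∞ e^{−u²} du`. -/
noncomputable def erfc (x : ℝ) : ℝ := (2 / Real.sqrt π) * ∫ u in Set.Ioi x, Real.exp (-u ^ 2)

lemma gInt : Integrable (fun u : ℝ => Real.exp (-u ^ 2)) := by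
  simpa using integrable_exp_neg_mul_sq (b := 1) one_pos

lemma erfc_add_neg (x : ℝ) : erfc x + erfc (-x) = 2 := by
  have h1 : ∫ u in Set.Ioi (-x), Real.exp (-u ^ 2) = ∫ u in Set.Iic x, Real.exp (-u ^ 2) := by
    have := integral_comp_neg_Iic x (fun u : ℝ => Real.exp (-u ^ 2))
    simpa using this.symm
  have h2 : (∫ u in Set.Iic x, Real.exp (-u ^ 2)) + ∫ u in Set.Ioi x, Real.exp (-u ^ 2)
      = √π := by
    rw [intervalIntegral.integral_Iic_add_Ioi gInt.integrableOn gInt.integrableOn]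
    simpa using integral_gaussian 1
  have h3 : √π ≠ 0 := (Real.sqrt_pos.2 Real.pi_pos).ne'
  unfold erfc
  rw [h1, ← mul_add, add_comm, h2]
  field_simp

lemma erfc_nonneg (x : ℝ) : 0 ≤ erfc x := by
  unfold erfc
  have : 0 ≤ ∫ u in Set.Ioi x, Real.exp (-u ^ 2) := integral_nonneg (fun u => (Real.exp_pos _).le)
  positivity

lemma erfc_le_two (x : ℝ) : erfc x ≤ 2 := by
  linarith [erfc_add_neg x, erfc_nonneg (-x)]

lemma erfc_continuous : Continuous erfc := by
  have : erfc = fun x => erfc 0 - (2 / √π) * ∫ u in (0:ℝ)..x, Real.exp (-u ^ 2) := by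
    funext x
    unfold erfc
    rw [← intervalIntegral.integral_Ioi_sub_Ioi' gInt.integrableOn gInt.integrableOn]
    ring
  rw [this]
  exact continuous_const.sub (continuous_const.mul
    (intervalIntegral.continuous_primitive (fun a b => gInt.intervalIntegrable) 0))

lemma erfc_le_exp (x : ℝ) : erfc x ≤ (2 / √π * Real.exp 1) * Real.exp (-x) := by
  unfold erfc
  rw [mul_assoc]
  refine mul_le_mul_of_nonneg_left ?_ (by positivity)
  rw [← integral_exp_neg_Ioi x, ← integral_const_mul]
  refine integral_mono gInt.integrableOn ((integrableOn_exp_neg_Ioi x).const_mul _) ?_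
  intro u
  simp only
  rw [← Real.exp_add]
  exact Real.exp_le_exp.2 (by nlinarith [sq_nonneg (u - 1/2)])

lemma erfc_integrableOn (c : ℝ) : IntegrableOn erfc (Set.Ioi c) := by
  refine Integrable.mono' ((integrableOn_exp_neg_Ioi c).const_mul (2 / √π * Real.exp 1))
    erfc_continuous.aestronglyMeasurable ?_
  refine Filter.Eventually.of_forall fun x => ?_
  rw [Real.norm_of_nonneg (erfc_nonneg x)]
  exact erfc_le_exp x

lemma arg_ge (B x : ℝ) : min 1 (Real.exp B) ≤ 1 + (Real.exp B - 1) / 2 * erfc x := by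
  have h0 := erfc_nonneg x
  have h2 := erfc_le_two x
  rcases le_total 1 (Real.exp B) with h | h
  · rw [min_eq_left h]; nlinarith
  · rw [min_eq_right h]; nlinarith

lemma min_pos' (B : ℝ) : 0 < min 1 (Real.exp B) := lt_min one_pos (Real.exp_pos B)

lemma arg_pos (B x : ℝ) : 0 < 1 + (Real.exp B - 1) / 2 * erfc x :=
  (min_pos' B).trans_le (arg_ge B x)

noncomputable def FF (B x : ℝ) : ℝ := Real.log (1 + (Real.exp B - 1) / 2 * erfc x)

lemma FF_continuous (B : ℝ) : Continuous (FF B) := by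
  unfold FF
  exact Continuous.log (continuous_const.add (continuous_const.mul erfc_continuous))
    (fun x => (arg_pos B x).ne')

lemma abs_log_le {m y : ℝ} (hm : 0 < m) (hm1 : m ≤ 1) (h : m ≤ y) :
    |Real.log y| ≤ |y - 1| / m := by
  have hy : 0 < y := hm.trans_le h
  have h1 := Real.log_le_sub_one_of_pos hy
  have h2 := Real.one_sub_inv_le_log_of_pos hy
  have h3 : |y - 1| ≤ |y - 1| / m := le_div_self (abs_nonneg _) hm hm1
  have h4 : |y - 1| / y ≤ |y - 1| / m := by gcongr
  have h5 : -(|y - 1| / y) ≤ 1 - y⁻¹ := by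
    have : 1 - y⁻¹ = (y - 1) / y := by field_simp
    rw [this, ← neg_div]
    gcongr
    exact neg_abs_le _
  rw [abs_le]
  constructor
  · linarith
  · linarith [le_abs_self (y - 1)]

lemma FF_integrableOn (B c : ℝ) : IntegrableOn (FF B) (Set.Ioi c) := by
  refine Integrable.mono' ((erfc_integrableOn c).const_mul
    (|(Real.exp B - 1) / 2| / min 1 (Real.exp B))) (FF_continuous B).aestronglyMeasurable ?_
  refine Filter.Eventually.of_forall fun x => ?_
  rw [Real.norm_eq_abs]
  refine (abs_log_le (min_pos' B) (min_le_left _ _) (arg_ge B x)).trans_eq ?_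
  rw [add_sub_cancel_left, abs_mul, abs_of_nonneg (erfc_nonneg x)]
  ring

lemma FF_neg (B x : ℝ) : FF (-B) (-x) = -B + FF B x := by
  unfold FF
  have h : 1 + (Real.exp (-B) - 1) / 2 * erfc (-x)
      = Real.exp (-B) * (1 + (Real.exp B - 1) / 2 * erfc x) := by
    have h1 : erfc (-x) = 2 - erfc x := by linarith [erfc_add_neg x]
    have h2 : Real.exp (-B) * Real.exp B = 1 := by rw [← Real.exp_add]; simp
    rw [h1]
    linear_combination (-(erfc x) / 2) * h2
  rw [h, Real.log_mul (Real.exp_pos _).ne' (arg_pos B x).ne', Real.log_exp]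

lemma FF_add (B x : ℝ) : FF B x + FF (-B) x
    = Real.log (1 + Real.sinh (B / 2) ^ 2 * erfc x * erfc (-x)) := by
  unfold FF
  rw [← Real.log_mul (arg_pos B x).ne' (arg_pos (-B) x).ne']
  congr 1
  have h1 : erfc (-x) = 2 - erfc x := by linarith [erfc_add_neg x]
  have h2 : Real.exp (-B) * Real.exp B = 1 := by rw [← Real.exp_add]; simp
  have h3 : Real.sinh (B / 2) ^ 2 = (Real.exp B + Real.exp (-B) - 2) / 4 := by
    have e1 : Real.exp B = Real.exp (B/2) ^ 2 := by rw [← Real.exp_nat_mul]; congr 1; push_cast; ring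
    have e2 : Real.exp (-B) = Real.exp (-(B/2)) ^ 2 := by
      rw [← Real.exp_nat_mul]; congr 1; push_cast; ring
    have e3 : Real.exp (-(B/2)) * Real.exp (B/2) = 1 := by rw [← Real.exp_add]; simp
    rw [Real.sinh_eq, e1, e2]
    linear_combination (-1/2) * e3
  rw [h1, h3]
  linear_combination (erfc x ^ 2 / 4) * h2

lemma shift_integral (f : ℝ → ℝ) (σ : ℝ) (hσ : 0 < σ) (ξ : ℝ) :
    ∫ η in Set.Ioi (0 : ℝ), f ((η + ξ) / σ) = σ * ∫ x in Set.Ioi (ξ / σ), f x := by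
  have h1 := integral_comp_mul_right_Ioi (fun y => f (y + ξ / σ)) 0 (inv_pos.2 hσ)
  have h2 : ∫ x in Set.Ioi (0 : ℝ), f (x + ξ / σ) = ∫ x in Set.Ioi (ξ / σ), f x := by
    have := (measurePreserving_add_right volume (ξ / σ)).setIntegral_preimage_emb
      (measurableEmbedding_addRight (ξ / σ)) f (Set.Ioi (ξ / σ))
    simpa using this
  simp only [zero_mul, inv_inv, smul_eq_mul] at h1
  rw [h2] at h1
  rw [← h1]
  congr 1
  funext η
  congr 1
  ring

lemma shift_integrable (f : ℝ → ℝ) (hf : ∀ c, IntegrableOn f (Set.Ioi c))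
    (σ : ℝ) (hσ : 0 < σ) (ξ : ℝ) :
    IntegrableOn (fun η => f ((η + ξ) / σ)) (Set.Ioi (0 : ℝ)) := by
  have h2 : IntegrableOn (fun x => f (x + ξ / σ)) (Set.Ioi (0 : ℝ)) := by
    have := (measurePreserving_add_right volume (ξ / σ)).integrableOn_comp_preimage
      (measurableEmbedding_addRight (ξ / σ)) (f := f) (s := Set.Ioi (ξ / σ))
    have h := this.2 (hf _)
    simpa [Function.comp_def] using h
  have h1 := (integrableOn_Ioi_comp_mul_right_iff (fun y => f (y + ξ / σ)) 0 (inv_pos.2 hσ)).2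
    (by simpa using h2)
  refine h1.congr_fun (fun η _ => ?_) measurableSet_Ioi
  simp only
  congr 1
  ring

theorem quenched_sinh_form (σ : ℝ) (hσ : 0 < σ) (B ξ : ℝ) :
    (∫ η in Set.Ioi (0 : ℝ),
        Real.log ((1 + (Real.exp B - 1) / 2 * erfc ((η + ξ) / σ)) *
          (1 + (Real.exp (-B) - 1) / 2 * erfc ((η - ξ) / σ))))
      = -(B * ξ) + σ * ∫ η in Set.Ioi (0 : ℝ),
          Real.log (1 + Real.sinh (B / 2) ^ 2 * erfc η * erfc (-η)) := by
  have hL : ∀ η : ℝ, Real.log ((1 + (Real.exp B - 1) / 2 * erfc ((η + ξ) / σ)) *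
          (1 + (Real.exp (-B) - 1) / 2 * erfc ((η - ξ) / σ)))
      = FF B ((η + ξ) / σ) + FF (-B) ((η + -ξ) / σ) := by
    intro η
    rw [Real.log_mul (arg_pos B _).ne' (arg_pos (-B) _).ne', ← sub_eq_add_neg]
    rfl
  simp_rw [hL, ← FF_add]
  rw [integral_add (shift_integrable _ (FF_integrableOn B) σ hσ ξ)
    (shift_integrable _ (FF_integrableOn (-B)) σ hσ (-ξ)),
    integral_add (FF_integrableOn B 0) (FF_integrableOn (-B) 0),
    shift_integral _ σ hσ, shift_integral _ σ hσ]
  have h1 := intervalIntegral.integral_Ioi_sub_Ioi' (FF_integrableOn B 0)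
    (FF_integrableOn B (ξ / σ))
  have h2 := intervalIntegral.integral_Ioi_sub_Ioi' (FF_integrableOn (-B) (-ξ / σ))
    (FF_integrableOn (-B) 0)
  have h3 : ∫ x in (-ξ / σ)..0, FF (-B) x = -B * (ξ / σ) + ∫ x in (0:ℝ)..(ξ / σ), FF B x := by
    have := intervalIntegral.integral_comp_neg (a := 0) (b := ξ / σ) (FF (-B))
    rw [neg_zero, ← neg_div] at this
    rw [← this]
    simp_rw [FF_neg]
    rw [intervalIntegral.integral_add (by simp) ((FF_continuous B).intervalIntegrable _ _)]
    simp
    ring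
  have h4 : σ * (ξ / σ) = ξ := by field_simp
  linear_combination (-σ) * h1 + σ * h2 + σ * h3 - B * h4
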